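/- Let S = (T, δ) be a ShEx schema, and fix values b^{T,p} and instances J_1, J_2 as follows: for each T ∈ T and each p :: T'^μ ∈ δ(T) with μ ∈ {1, +}, the b^{T,p} are pairwise distinct, with b^{T,p} ∈ NullLit if T' = Lit and b^{T,p} ∈ Blank if T' ∈ T; J_1 = { T'(b^{T,p}) | T ∈ T, p :: T'^μ ∈ δ(T), μ ∈ {1, +} }; J_2 = { Triple(b^{T,p}, q, b^{T_1,q}) | T_1(b^{T,p}) ∈ J_1 with T_1 ∈ T, and q :: T_2^μ ∈ δ(T_1) with μ ∈ {1, +} }. Let J be an instance of G_T such that: (i) every fact Triple(s,p,o) ∈ J has s ∈ Iri, p ∈ Iri, o ∈ Iri ∪ Lit, every fact T(n) ∈ J with T ∈ T has n ∈ Iri, and every fact Lit(n) ∈ J has n ∈ Lit; (ii) J satisfies every sentence tc(T, T', p) and every sentence mult≤1(T, p) of Σ_S; (iii) no value b^{T,p} occurs in any fact of J; and (iv) every value carries at most one type in J, i.e., if T(n) ∈ J and T''(n) ∈ J with T, T'' ∈ T then T = T''. Define J_3 = { Triple(a, p, b^{T,p}) | T(a) ∈ J with T ∈ T, p :: T'^μ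 ∈ δ(T) with μ ∈ {1, +}, and there is no b' with Triple(a, p, b') ∈ J }. Then the instance G = J ∪ J_1 ∪ J_2 ∪ J_3 satisfies every sentence of Σ_S. -/

import Mathlib

namespace RdfDE

/-- The RDF domain: a countably infinite domain partitioned into IRIs, literals and
blank nodes, with a distinguished infinite subset of null literals. -/
structure RDFDom (Dom : Type) where
  Iri : Set Dom
  Lit : Set Dom
  Blank : Set Dom
  NullLit : Set Dom
  cover : Iri ∪ Lit ∪ Blank = Set.univ
  disjIL : Disjoint Iri Lit
  disjIB : Disjoint Iri Blank
  disjLB : Disjoint Lit Blank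
  nullSub : NullLit ⊆ Lit
  infIri : Iri.Infinite
  infLit : Lit.Infinite
  infBlank : Blank.Infinite
  infNull : NullLit.Infinite

/-- Multiplicities 1, ?, *, +. -/
inductive Mult : Type
  | one | opt | star | plus

/-- A triple constraint `p :: T'^μ`; `target = none` stands for `Lit`. -/
structure TC (Dom Shape : Type) where
  prop : Dom
  target : Option Shape
  mult : Mult

/-- A ShEx schema over the (finite) type `Shape` of shape names. -/
structure ShEx (Dom Shape : Type) (D : RDFDom Dom) where
  δ : Shape → Set (TC Dom Shape)
  finite : ∀ T, (δ T).Finite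
  propIri : ∀ T : Shape, ∀ tc ∈ δ T, tc.prop ∈ D.Iri
  uniqueProp : ∀ T : Shape, ∀ tc1 ∈ δ T, ∀ tc2 ∈ δ T, tc1.prop = tc2.prop → tc1 = tc2

/-- Facts of the target signature `G_T`: a ternary `Triple`, unary `Lit`,
and a unary relation for each shape name. -/
inductive Fact (Dom Shape : Type) : Type
  | triple (s p o : Dom)
  | lit (n : Dom)
  | shape (T : Shape) (n : Dom)

/-- The unary fact `T(n)` where `T ∈ 𝒯 ∪ {Lit}`. -/
def factOf {Dom Shape : Type} (t : Option Shape) (n : Dom) : Fact Dom Shape :=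
  match t with
  | none => .lit n
  | some T => .shape T n

/-- Cardinality constraint imposed by a multiplicity on the set of objects. -/
def multOk {Dom : Type} (μ : Mult) (K : Set Dom) : Prop :=
  match μ with
  | .one => ∃! y, y ∈ K
  | .opt => K.Subsingleton
  | .star => True
  | .plus => K.Nonempty

/-- `J` satisfies every sentence of `Σ_S`: the sort sentences, and for each
triple constraint the sentences `tc`, `mult≥1` (if μ ∈ {1,+}) and `mult≤1` (if μ ∈ {1,?}). -/
def satSigma {Dom Shape : Type} (D : RDFDom Dom) (S : ShEx Dom Shape D)
    (J : Set (Fact Dom Shape)) : Prop :=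
  (∀ (T : Shape) (n : Dom), Fact.shape T n ∈ J → n ∈ D.Iri ∪ D.Blank) ∧
  (∀ n : Dom, Fact.lit n ∈ J → n ∈ D.Lit) ∧
  (∀ T : Shape, ∀ tc ∈ S.δ T,
    (∀ x y : Dom, Fact.shape T x ∈ J → Fact.triple x tc.prop y ∈ J →
      factOf tc.target y ∈ J) ∧
    ((tc.mult = Mult.one ∨ tc.mult = Mult.plus) →
      ∀ x : Dom, Fact.shape T x ∈ J → ∃ y : Dom, Fact.triple x tc.prop y ∈ J) ∧
    ((tc.mult = Mult.one ∨ tc.mult = Mult.opt) →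
      ∀ x y z : Dom, Fact.shape T x ∈ J → Fact.triple x tc.prop y ∈ J →
        Fact.triple x tc.prop z ∈ J → y = z))

/-- Nodes of a graph: values occurring in subject or object position. -/
def nodes {Dom : Type} (G : Set (Dom × Dom × Dom)) : Set Dom :=
  {n | ∃ t ∈ G, t.1 = n ∨ t.2.2 = n}

/-- `G` is an RDF graph: triples lie in `(Iri ∪ Blank) × Iri × (Iri ∪ Blank ∪ Lit)`. -/
def isRDFGraph {Dom : Type} (D : RDFDom Dom) (G : Set (Dom × Dom × Dom)) : Prop :=
  ∀ t ∈ G, t.1 ∈ D.Iri ∪ D.Blank ∧ t.2.1 ∈ D.Iri ∧ t.2.2 ∈ D.Iri ∪ D.Blank ∪ D.Lit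

/-- rdf-to-inst(G, typing). -/
def rdfToInst {Dom Shape : Type} (G : Set (Dom × Dom × Dom))
    (typing : Dom → Set (Option Shape)) : Set (Fact Dom Shape) :=
  {F | (∃ t ∈ G, F = Fact.triple t.1 t.2.1 t.2.2) ∨
       (∃ n ∈ nodes G, ∃ T ∈ typing n, F = factOf T n)}

/-- The graph component of inst-to-rdf(I). -/
def instGraph {Dom Shape : Type} (I : Set (Fact Dom Shape)) : Set (Dom × Dom × Dom) :=
  {t | Fact.triple t.1 t.2.1 t.2.2 ∈ I}

/-- The typing component of inst-to-rdf(I) (empty off the nodes of the graph). -/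
def instTyping {Dom Shape : Type} (I : Set (Fact Dom Shape)) : Dom → Set (Option Shape) :=
  fun n => {T | n ∈ nodes (instGraph I) ∧ factOf T n ∈ I}

/-- `(G, typing)` is correctly typed w.r.t. the schema `S`. -/
def correctlyTyped {Dom Shape : Type} (D : RDFDom Dom) (S : ShEx Dom Shape D)
    (G : Set (Dom × Dom × Dom)) (typing : Dom → Set (Option Shape)) : Prop :=
  ∀ n ∈ nodes G,
    ((none : Option Shape) ∈ typing n → n ∈ D.Lit) ∧
    (∀ T : Shape, some T ∈ typing n →
      n ∈ D.Iri ∪ D.Blank ∧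
      ∀ tc ∈ S.δ T,
        (∀ m : Dom, (n, tc.prop, m) ∈ G → tc.target ∈ typing m) ∧
        multOk tc.mult {m : Dom | (n, tc.prop, m) ∈ G})

/-- A fact `R(t)` of a relational instance. -/
structure RelFact (Dom RSym : Type) (ar : RSym → ℕ) where
  sym : RSym
  args : Fin (ar sym) → Dom

/-- A functional dependency `R : X → Y`. -/
structure Fd (RSym : Type) (ar : RSym → ℕ) where
  sym : RSym
  X : Set (Fin (ar sym))
  Y : Set (Fin (ar sym))

/-- The fd `φ` holds in the relational instance `I`. -/
def fdHolds {Dom RSym : Type} {ar : RSym → ℕ} (I : Set (RelFact Dom RSym ar))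
    (φ : Fd RSym ar) : Prop :=
  ∀ t1 t2 : Fin (ar φ.sym) → Dom,
    (⟨φ.sym, t1⟩ : RelFact Dom RSym ar) ∈ I →
    (⟨φ.sym, t2⟩ : RelFact Dom RSym ar) ∈ I →
    (∀ i ∈ φ.X, t1 i = t2 i) → ∀ j ∈ φ.Y, t1 j = t2 j

/-- A valid instance of the relational schema: finite, over `Lit \ NullLit`,
satisfying all functional dependencies. -/
def validInst {Dom RSym : Type} {ar : RSym → ℕ} (D : RDFDom Dom)
    (fds : Set (Fd RSym ar)) (I : Set (RelFact Dom RSym ar)) : Prop :=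
  I.Finite ∧ (∀ F ∈ I, ∀ i, F.args i ∈ D.Lit \ D.NullLit) ∧ ∀ φ ∈ fds, fdHolds I φ

/-- A relational atom with variables in `V`. -/
structure Atom (RSym : Type) (ar : RSym → ℕ) (V : Type) where
  sym : RSym
  args : Fin (ar sym) → V

/-- The object term of an std: either a variable or a functional term `g(z)`. -/
inductive Obj (FSym : Type) (far : FSym → ℕ) (V : Type) : Type
  | var (v : V)
  | app (g : FSym) (z : Fin (far g) → V)

/-- A fully-typed source-to-target tgd
`∀x,y. φ(x,y) ⇒ Triple(f(x), p, o) ∧ T_s(f(x)) ∧ T_o(o)`, where `x` has length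
`far f`, `y` has length `ny`, and the body uses exactly the variables `x ∪ y`. -/
structure Std (Dom RSym FSym : Type) (ar : RSym → ℕ) (far : FSym → ℕ) where
  f : FSym
  ny : ℕ
  body : Set (Atom RSym ar (Fin (far f) ⊕ Fin ny))
  bodyFinite : body.Finite
  covers : ∀ v : Fin (far f) ⊕ Fin ny, ∃ a ∈ body, ∃ i, a.args i = v
  p : Dom
  obj : Obj FSym far (Fin (far f) ⊕ Fin ny)

/-- The variables `x ∪ y` of an std. -/
abbrev Std.Var {Dom RSym FSym : Type} {ar : RSym → ℕ} {far : FSym → ℕ}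
    (σ : Std Dom RSym FSym ar far) : Type :=
  Fin (far σ.f) ⊕ Fin σ.ny

/-- `ν^{F_int}(o)`. -/
def Obj.eval {Dom FSym : Type} {far : FSym → ℕ} {V : Type}
    (Fint : (f : FSym) → (Fin (far f) → Dom) → Dom) (ν : V → Dom) :
    Obj FSym far V → Dom
  | .var v => ν v
  | .app g z => Fint g (fun i => ν (z i))

/-- The type `T_o` of the object of an std: `Lit` (i.e. `none`) for a variable,
`type(g)` for a functional term `g(z)`. -/
def Std.objType {Dom RSym FSym Shape : Type} {ar : RSym → ℕ} {far : FSym → ℕ}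
    (ftype : FSym → Shape) (σ : Std Dom RSym FSym ar far) : Option Shape :=
  match σ.obj with
  | .var _ => none
  | .app g _ => some (ftype g)

/-- The valuation `ν` maps every atom of the body of `σ` to a fact of `I`. -/
def bodyHolds {Dom RSym FSym : Type} {ar : RSym → ℕ} {far : FSym → ℕ}
    (σ : Std Dom RSym FSym ar far) (ν : σ.Var → Dom)
    (I : Set (RelFact Dom RSym ar)) : Prop :=
  ∀ a ∈ σ.body, (⟨a.sym, fun i => ν (a.args i)⟩ : RelFact Dom RSym ar) ∈ I

/-- `I ∪ J ∪ F_int ⊨ σ`. -/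
def stdSat {Dom RSym FSym Shape : Type} {ar : RSym → ℕ} {far : FSym → ℕ}
    (Fint : (f : FSym) → (Fin (far f) → Dom) → Dom) (ftype : FSym → Shape)
    (σ : Std Dom RSym FSym ar far) (I : Set (RelFact Dom RSym ar))
    (J : Set (Fact Dom Shape)) : Prop :=
  ∀ ν : σ.Var → Dom, bodyHolds σ ν I →
    Fact.triple (Fint σ.f fun i => ν (Sum.inl i)) σ.p (Obj.eval Fint ν σ.obj) ∈ J ∧
    Fact.shape (ftype σ.f) (Fint σ.f fun i => ν (Sum.inl i)) ∈ J ∧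
    factOf (σ.objType ftype) (Obj.eval Fint ν σ.obj) ∈ J

/-- The std conforms to the schema `S`: if `δ(T_s)` contains a triple constraint
on the property `p` of the std then its target is `T_o`. -/
def Std.conforms {Dom RSym FSym Shape : Type} {ar : RSym → ℕ} {far : FSym → ℕ}
    (D : RDFDom Dom) (S : ShEx Dom Shape D) (ftype : FSym → Shape)
    (σ : Std Dom RSym FSym ar far) : Prop :=
  ∀ tc ∈ S.δ (ftype σ.f), tc.prop = σ.p → tc.target = σ.objType ftype

/-- A fully-typed data exchange setting `(R, S, Σ_st, F, F_int)`. -/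
structure DES (Dom RSym FSym Shape : Type) (ar : RSym → ℕ) (far : FSym → ℕ) where
  D : RDFDom Dom
  shex : ShEx Dom Shape D
  fds : Set (Fd RSym ar)
  fdsFin : fds.Finite
  ftype : FSym → Shape
  Fint : (f : FSym) → (Fin (far f) → Dom) → Dom
  FintIri : ∀ f args, Fint f args ∈ D.Iri
  FintInj : ∀ f, Function.Injective (Fint f)
  FintDisj : ∀ f g, f ≠ g → ∀ a b, Fint f a ≠ Fint g b
  stds : Set (Std Dom RSym FSym ar far)
  stdsFin : stds.Finite
  stP : ∀ σ ∈ stds, σ.p ∈ D.Iri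
  stConf : ∀ σ ∈ stds, σ.conforms D shex ftype

variable {Dom RSym FSym Shape : Type} {ar : RSym → ℕ} {far : FSym → ℕ}

/-- `σ1, σ2` are a contentious pair of stds of the setting. -/
def contentious (des : DES Dom RSym FSym Shape ar far)
    (σ1 σ2 : Std Dom RSym FSym ar far) : Prop :=
  σ1 ∈ des.stds ∧ σ2 ∈ des.stds ∧ σ1.f = σ2.f ∧ σ1.p = σ2.p ∧
  ∃ tc ∈ des.shex.δ (des.ftype σ1.f), tc.prop = σ1.p ∧
    tc.target = σ1.objType des.ftype ∧ (tc.mult = Mult.one ∨ tc.mult = Mult.opt)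

/-- `σ1, σ2` are functionally overlapping. -/
def funOverlap (des : DES Dom RSym FSym Shape ar far)
    (σ1 σ2 : Std Dom RSym FSym ar far) : Prop :=
  ∀ I : Set (RelFact Dom RSym ar), validInst des.D des.fds I →
    ∀ (ν1 : σ1.Var → Dom) (ν2 : σ2.Var → Dom),
      bodyHolds σ1 ν1 I → bodyHolds σ2 ν2 I →
      HEq (fun i : Fin (far σ1.f) => ν1 (Sum.inl i))
          (fun i : Fin (far σ2.f) => ν2 (Sum.inl i)) →
      Obj.eval des.Fint ν1 σ1.obj = Obj.eval des.Fint ν2 σ2.obj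

/-- The setting is key-covered. -/
def keyCovered (des : DES Dom RSym FSym Shape ar far) : Prop :=
  ∀ σ1 σ2, contentious des σ1 σ2 → funOverlap des σ1 σ2

/-- `J` is a solution for the valid source instance `I`. -/
def isSolution (des : DES Dom RSym FSym Shape ar far)
    (I : Set (RelFact Dom RSym ar)) (J : Set (Fact Dom Shape)) : Prop :=
  (∀ σ ∈ des.stds, stdSat des.Fint des.ftype σ I J) ∧ satSigma des.D des.shex J

/-- The setting is consistent: every valid source instance has a solution. -/
def consistent (des : DES Dom RSym FSym Shape ar far) : Prop :=
  ∀ I : Set (RelFact Dom RSym ar), validInst des.D des.fds I →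
    ∃ J : Set (Fact Dom Shape), isSolution des I J

/-- The canonical target instance `J_0` of `I`. -/
def canonical (des : DES Dom RSym FSym Shape ar far)
    (I : Set (RelFact Dom RSym ar)) : Set (Fact Dom Shape) :=
  {F | ∃ σ ∈ des.stds, ∃ ν : σ.Var → Dom, bodyHolds σ ν I ∧
    (F = Fact.triple (des.Fint σ.f fun i => ν (Sum.inl i)) σ.p (Obj.eval des.Fint ν σ.obj) ∨
     F = Fact.shape (des.ftype σ.f) (des.Fint σ.f fun i => ν (Sum.inl i)) ∨
     F = factOf (σ.objType des.ftype) (Obj.eval des.Fint ν σ.obj))}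

/-- The vector `z` of variables of the object term of an std (of length 1 if the
object is a variable). -/
def Std.objVars (σ : Std Dom RSym FSym ar far) : Σ n : ℕ, Fin n → σ.Var :=
  match σ.obj with
  | .var v => ⟨1, fun _ => v⟩
  | .app g z => ⟨far g, z⟩

/-- The view `V_σ(I)` as a set of pairs of tuples (encoded as lists):
the values of `x` and the values of `z`. -/
def viewRel (σ : Std Dom RSym FSym ar far) (I : Set (RelFact Dom RSym ar)) :
    Set (List Dom × List Dom) :=
  {ab | ∃ ν : σ.Var → Dom, bodyHolds σ ν I ∧
        ab.1 = List.ofFn (fun i : Fin (far σ.f) => ν (Sum.inl i)) ∧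
        ab.2 = List.ofFn (fun j => ν (σ.objVars.2 j))}

/-- The object terms of `σ1` and `σ2` are either both variables or both functional
terms over the same function symbol. -/
def objMatch (σ1 σ2 : Std Dom RSym FSym ar far) : Prop :=
  (∃ v1 v2, σ1.obj = Obj.var v1 ∧ σ2.obj = Obj.var v2) ∨
  (∃ g z1 z2, σ1.obj = Obj.app g z1 ∧ σ2.obj = Obj.app g z2)

/-- `(T, p)` is a pair for which a fresh value `b^{T,p}` is needed:
`δ(T)` has a constraint on `p` with multiplicity in `{1, +}`. -/
def relevantBP {Dom Shape : Type} {D : RDFDom Dom} (S : ShEx Dom Shape D)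
    (T : Shape) (p : Dom) : Prop :=
  ∃ tc ∈ S.δ T, tc.prop = p ∧ (tc.mult = Mult.one ∨ tc.mult = Mult.plus)

/-- `J_1 = { T'(b^{T,p}) | p :: T'^μ ∈ δ(T), μ ∈ {1,+} }`. -/
def J1set {Dom Shape : Type} {D : RDFDom Dom} (S : ShEx Dom Shape D)
    (b : Shape → Dom → Dom) : Set (Fact Dom Shape) :=
  {F | ∃ T : Shape, ∃ tc ∈ S.δ T, (tc.mult = Mult.one ∨ tc.mult = Mult.plus) ∧
       F = factOf tc.target (b T tc.prop)}

/-- `J_2 = { Triple(b^{T,p}, q, b^{T_1,q}) | T_1(b^{T,p}) ∈ J_1, q :: T_2^μ ∈ δ(T_1), μ ∈ {1,+} }`. -/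
def J2set {Dom Shape : Type} {D : RDFDom Dom} (S : ShEx Dom Shape D)
    (b : Shape → Dom → Dom) : Set (Fact Dom Shape) :=
  {F | ∃ (T1 : Shape) (n : Dom), Fact.shape T1 n ∈ J1set S b ∧
       ∃ tc2 ∈ S.δ T1, (tc2.mult = Mult.one ∨ tc2.mult = Mult.plus) ∧
       F = Fact.triple n tc2.prop (b T1 tc2.prop)}

/-- `J_3 = { Triple(a, p, b^{T,p}) | T(a) ∈ J, p :: T'^μ ∈ δ(T), μ ∈ {1,+},
no Triple(a, p, b') in J }`. -/
def J3set {Dom Shape : Type} {D : RDFDom Dom} (S : ShEx Dom Shape D)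
    (b : Shape → Dom → Dom) (J : Set (Fact Dom Shape)) : Set (Fact Dom Shape) :=
  {F | ∃ (T : Shape) (n : Dom), Fact.shape T n ∈ J ∧
       ∃ tc ∈ S.δ T, (tc.mult = Mult.one ∨ tc.mult = Mult.plus) ∧
       (¬ ∃ y : Dom, Fact.triple n tc.prop y ∈ J) ∧
       F = Fact.triple n tc.prop (b T tc.prop)}

/-- The value `d` occurs in the fact `F`. -/
def occursIn {Dom Shape : Type} (d : Dom) : Fact Dom Shape → Prop
  | .triple s p o => d = s ∨ d = p ∨ d = o
  | .lit n => d = n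
  | .shape _ n => d = n

variable {Dom RSym FSym Shape : Type} {ar : RSym → ℕ} {far : FSym → ℕ}

/-! Every constraint on a typed node can be checked property by property. A node typed in `J` is an
IRI and a node typed in `J₁` is blank, and neither source gives a node two types, so every node of
`G` has at most one type. Hence the `p`-values in `G` of a node of type `T` are its `p`-values in `J`
if there are any, and otherwise at most the single value `b^{T,p}`, which is present exactly when
`(T, p)` requires a value. In the first case the constraints are inherited from `J`, in the second
they hold by the choice of `b^{T,p}`. -/

section Facts

variable {Dom Shape : Type}

theorem factOf_inj {t t' : Option Shape} {n n' : Dom} :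
    factOf t n = factOf t' n' ↔ t = t' ∧ n = n' := by
  cases t <;> cases t' <;> simp [factOf]

theorem factOf_ne_triple (t : Option Shape) (n s p o : Dom) :
    factOf t n ≠ Fact.triple s p o := by
  cases t <;> simp [factOf]

/-- Every value carries at most one type in `J`; `Lit` does not count as a type here. -/
def UniquelyTyped (J : Set (Fact Dom Shape)) : Prop :=
  ∀ (T T' : Shape) (n : Dom), Fact.shape T n ∈ J → Fact.shape T' n ∈ J → T = T'

/-- Constraints of multiplicity `1` or `+`, those that demand at least one value. -/
def TC.IsMandatory (tc : TC Dom Shape) : Prop :=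
  tc.mult = Mult.one ∨ tc.mult = Mult.plus

end Facts

section Nulls

variable {Dom Shape : Type} {D : RDFDom Dom} {S : ShEx Dom Shape D} {b : Shape → Dom → Dom}
  {T : Shape} {tc : TC Dom Shape} {n s p o : Dom}

theorem relevantBP_prop_iff (htc : tc ∈ S.δ T) :
    relevantBP S T tc.prop ↔ tc.IsMandatory := by
  refine ⟨?_, fun hm => ⟨tc, htc, rfl, hm⟩⟩
  rintro ⟨tc', htc', hprop, hm⟩
  rwa [S.uniqueProp T tc' htc' tc htc hprop] at hm

theorem factOf_mem_J1set_iff {t : Option Shape} :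
    factOf t n ∈ J1set S b ↔
      ∃ T, ∃ tc ∈ S.δ T, tc.IsMandatory ∧ t = tc.target ∧ n = b T tc.prop := by
  simp only [J1set, TC.IsMandatory, Set.mem_ofPred_eq, factOf_inj]

theorem triple_notMem_J1set : Fact.triple s p o ∉ J1set S b := by
  rintro ⟨T, tc, -, -, h⟩
  exact factOf_ne_triple _ _ _ _ _ h.symm

theorem mem_Lit_of_lit_mem_J1set
    (hbLit : ∀ T, ∀ tc ∈ S.δ T, tc.IsMandatory → tc.target = none → b T tc.prop ∈ D.Lit)
    (h : Fact.lit n ∈ J1set S b) : n ∈ D.Lit := by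
  obtain ⟨T, tc, htc, hm, ht, rfl⟩ := factOf_mem_J1set_iff (t := none).mp h
  exact hbLit T tc htc hm ht.symm

theorem mem_Blank_of_shape_mem_J1set
    (hbBlank : ∀ T, ∀ tc ∈ S.δ T, tc.IsMandatory →
      ∀ T₁, tc.target = some T₁ → b T tc.prop ∈ D.Blank)
    (h : Fact.shape T n ∈ J1set S b) : n ∈ D.Blank := by
  obtain ⟨T₀, tc, htc, hm, ht, rfl⟩ := factOf_mem_J1set_iff (t := some T).mp h
  exact hbBlank T₀ tc htc hm T ht.symm

theorem uniquelyTyped_J1set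
    (hinj : ∀ T p T' p', relevantBP S T p → relevantBP S T' p' →
      b T p = b T' p' → T = T' ∧ p = p') :
    UniquelyTyped (J1set S b) := by
  intro T₁ T₁' n h h'
  obtain ⟨T, tc, htc, hm, ht, rfl⟩ := factOf_mem_J1set_iff (t := some T₁).mp h
  obtain ⟨T', tc', htc', hm', ht', hn⟩ := factOf_mem_J1set_iff (t := some T₁').mp h'
  obtain ⟨rfl, hprop⟩ := hinj _ _ _ _ ((relevantBP_prop_iff htc).mpr hm)
    ((relevantBP_prop_iff htc').mpr hm') hn
  obtain rfl := S.uniqueProp T tc htc tc' htc' hprop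
  exact Option.some.inj (ht.trans ht'.symm)

end Nulls

/-- The instance `G = J ∪ J₁ ∪ J₂ ∪ J₃`: `J` with every missing mandatory value supplied by the
nulls `b^{T,p}`. -/
def completion {Dom Shape : Type} {D : RDFDom Dom} (S : ShEx Dom Shape D)
    (b : Shape → Dom → Dom) (J : Set (Fact Dom Shape)) : Set (Fact Dom Shape) :=
  J ∪ J1set S b ∪ J2set S b ∪ J3set S b J

namespace completion

variable {Dom Shape : Type} {D : RDFDom Dom} {S : ShEx Dom Shape D} {b : Shape → Dom → Dom}
  {J : Set (Fact Dom Shape)} {T : Shape} {tc : TC Dom Shape} {s p o x y z : Dom}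

theorem factOf_mem_iff {t : Option Shape} :
    factOf t x ∈ completion S b J ↔ factOf t x ∈ J ∨ factOf t x ∈ J1set S b := by
  simp [completion, J2set, J3set, factOf_ne_triple]

theorem shape_mem_iff :
    Fact.shape T x ∈ completion S b J ↔ Fact.shape T x ∈ J ∨ Fact.shape T x ∈ J1set S b :=
  factOf_mem_iff (t := some T)

theorem lit_mem_iff :
    Fact.lit x ∈ completion S b J ↔ Fact.lit x ∈ J ∨ Fact.lit x ∈ J1set S b :=
  factOf_mem_iff (t := none)

theorem uniquelyTyped (hJ : UniquelyTyped J) (hJ₁ : UniquelyTyped (J1set S b))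
    (hdisj : ∀ T T' x, Fact.shape T x ∈ J → Fact.shape T' x ∉ J1set S b) :
    UniquelyTyped (completion S b J) := by
  intro T T' x h h'
  rcases shape_mem_iff.mp h with h | h <;> rcases shape_mem_iff.mp h' with h' | h'
  · exact hJ T T' x h h'
  · exact absurd h' (hdisj T T' x h)
  · exact absurd h (hdisj T' T x h')
  · exact hJ₁ T T' x h h'

theorem triple_null_mem (hx : Fact.shape T x ∈ completion S b J) (hrel : relevantBP S T p)
    (hnone : ¬ ∃ y, Fact.triple x p y ∈ J) : Fact.triple x p (b T p) ∈ completion S b J := by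
  obtain ⟨tc, htc, rfl, hm⟩ := hrel
  rcases shape_mem_iff.mp hx with hx | hx
  · exact Or.inr ⟨T, x, hx, tc, htc, hm, hnone, rfl⟩
  · exact Or.inl (Or.inr ⟨T, x, hx, tc, htc, hm, rfl⟩)

theorem exists_triple_mem (hx : Fact.shape T x ∈ completion S b J) (hrel : relevantBP S T p) :
    ∃ y, Fact.triple x p y ∈ completion S b J := by
  by_cases h : ∃ y, Fact.triple x p y ∈ J
  · exact h.imp fun _ hy => Or.inl (Or.inl (Or.inl hy))
  · exact ⟨b T p, triple_null_mem hx hrel h⟩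

section Triples

variable (hsubj : ∀ T s p o, Fact.triple s p o ∈ J → Fact.shape T s ∉ J1set S b)
include hsubj

-- `J₂` and `J₃` follow one rule, because a node typed in `J₁` has no values in `J`.
theorem triple_mem_iff :
    Fact.triple s p o ∈ completion S b J ↔ Fact.triple s p o ∈ J ∨
      (¬ ∃ y, Fact.triple s p y ∈ J) ∧
        ∃ T, Fact.shape T s ∈ completion S b J ∧ relevantBP S T p ∧ o = b T p := by
  constructor
  · rintro (((h | h) | ⟨T, n, hn, tc, htc, hm, h⟩) | ⟨T, n, hn, tc, htc, hm, hnone, h⟩)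
    · exact Or.inl h
    · exact absurd h triple_notMem_J1set
    · cases h
      exact Or.inr ⟨fun ⟨y, hy⟩ => hsubj T _ _ y hy hn, T, shape_mem_iff.mpr (Or.inr hn),
        ⟨tc, htc, rfl, hm⟩, rfl⟩
    · cases h
      exact Or.inr ⟨hnone, T, shape_mem_iff.mpr (Or.inl hn), ⟨tc, htc, rfl, hm⟩, rfl⟩
  · rintro (h | ⟨hnone, T, hs, hrel, rfl⟩)
    · exact Or.inl (Or.inl (Or.inl h))
    · exact triple_null_mem hs hrel hnone

theorem triple_mem_iff_of_shape_mem (huniq : UniquelyTyped (completion S b J))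
    (hx : Fact.shape T x ∈ completion S b J) :
    Fact.triple x p y ∈ completion S b J ↔ Fact.triple x p y ∈ J ∨
      (¬ ∃ y', Fact.triple x p y' ∈ J) ∧ relevantBP S T p ∧ y = b T p := by
  rw [triple_mem_iff hsubj]
  refine or_congr_right (and_congr_right fun _ => ⟨?_, fun h => ⟨T, hx, h⟩⟩)
  rintro ⟨T', hx', h⟩
  rwa [huniq T T' x hx hx']

theorem shape_mem_of_triple_mem (hx : Fact.shape T x ∈ completion S b J)
    (hxy : Fact.triple x p y ∈ J) : Fact.shape T x ∈ J :=
  (shape_mem_iff.mp hx).resolve_right (hsubj T x p y hxy)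

theorem factOf_target_mem (huniq : UniquelyTyped (completion S b J)) (htc : tc ∈ S.δ T)
    (hJtc : ∀ x y, Fact.shape T x ∈ J → Fact.triple x tc.prop y ∈ J → factOf tc.target y ∈ J)
    (hx : Fact.shape T x ∈ completion S b J) (hxy : Fact.triple x tc.prop y ∈ completion S b J) :
    factOf tc.target y ∈ completion S b J := by
  rw [factOf_mem_iff]
  rcases (triple_mem_iff_of_shape_mem hsubj huniq hx).mp hxy with h | ⟨-, hrel, rfl⟩
  · exact Or.inl (hJtc x y (shape_mem_of_triple_mem hsubj hx h) h)
  · exact Or.inr ⟨T, tc, htc, (relevantBP_prop_iff htc).mp hrel, rfl⟩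

theorem eq_of_triple_mem (huniq : UniquelyTyped (completion S b J))
    (hJmult : ∀ x y z, Fact.shape T x ∈ J → Fact.triple x p y ∈ J → Fact.triple x p z ∈ J → y = z)
    (hx : Fact.shape T x ∈ completion S b J) (hxy : Fact.triple x p y ∈ completion S b J)
    (hxz : Fact.triple x p z ∈ completion S b J) : y = z := by
  rw [triple_mem_iff_of_shape_mem hsubj huniq hx] at hxy hxz
  rcases hxy with hy | ⟨hnone, -, rfl⟩ <;> rcases hxz with hz | ⟨hnone', -, rfl⟩
  · exact hJmult x y z (shape_mem_of_triple_mem hsubj hx hy) hy hz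
  · exact absurd ⟨y, hy⟩ hnone'
  · exact absurd ⟨z, hz⟩ hnone
  · rfl

end Triples

end completion

theorem stmt7_general {Dom Shape : Type}
    (D : RDFDom Dom) (S : ShEx Dom Shape D) (b : Shape → Dom → Dom)
    (J : Set (Fact Dom Shape))
    (hJ₁uniq : UniquelyTyped (J1set S b))
    (hbLit : ∀ T, ∀ tc ∈ S.δ T, tc.IsMandatory → tc.target = none → b T tc.prop ∈ D.Lit)
    (hbBlank : ∀ T, ∀ tc ∈ S.δ T, tc.IsMandatory →
      ∀ T₁, tc.target = some T₁ → b T tc.prop ∈ D.Blank)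
    (hJsubj : ∀ s p o, Fact.triple s p o ∈ J → s ∈ D.Iri)
    (hJshape : ∀ T n, Fact.shape T n ∈ J → n ∈ D.Iri)
    (hJlit : ∀ n, Fact.lit n ∈ J → n ∈ D.Lit)
    (hJtc : ∀ T, ∀ tc ∈ S.δ T, ∀ x y,
      Fact.shape T x ∈ J → Fact.triple x tc.prop y ∈ J → factOf tc.target y ∈ J)
    (hJmult : ∀ T, ∀ tc ∈ S.δ T, (tc.mult = Mult.one ∨ tc.mult = Mult.opt) →
      ∀ x y z, Fact.shape T x ∈ J → Fact.triple x tc.prop y ∈ J →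
        Fact.triple x tc.prop z ∈ J → y = z)
    (hJuniq : UniquelyTyped J) :
    satSigma D S (completion S b J) := by
  have hblank : ∀ {T n}, Fact.shape T n ∈ J1set S b → n ∈ D.Blank :=
    mem_Blank_of_shape_mem_J1set hbBlank
  have hsubj : ∀ T s p o, Fact.triple s p o ∈ J → Fact.shape T s ∉ J1set S b :=
    fun T s p o h h₁ => Set.disjoint_left.mp D.disjIB (hJsubj s p o h) (hblank h₁)
  have huniq : UniquelyTyped (completion S b J) :=
    completion.uniquelyTyped hJuniq hJ₁uniq fun T T' x h h₁ =>
      Set.disjoint_left.mp D.disjIB (hJshape T x h) (hblank h₁)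
  refine ⟨fun T n h => (completion.shape_mem_iff.mp h).imp (hJshape T n) hblank,
    fun n h => (completion.lit_mem_iff.mp h).elim (hJlit n) (mem_Lit_of_lit_mem_J1set hbLit),
    fun T tc htc => ⟨fun x y => ?_, fun hm x hx => ?_, fun hm x y z => ?_⟩⟩
  · exact completion.factOf_target_mem hsubj huniq htc (hJtc T tc htc)
  · exact completion.exists_triple_mem hx ((relevantBP_prop_iff htc).mpr hm)
  · exact completion.eq_of_triple_mem hsubj huniq (hJmult T tc htc hm)

theorem stmt7 {Dom Shape : Type} [Countable Dom] [Finite Shape]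
    (D : RDFDom Dom) (S : ShEx Dom Shape D) (b : Shape → Dom → Dom)
    (J : Set (Fact Dom Shape))
    (hinj : ∀ T p T' p', relevantBP S T p → relevantBP S T' p' →
      b T p = b T' p' → T = T' ∧ p = p')
    (hsort : ∀ T : Shape, ∀ tc ∈ S.δ T, (tc.mult = Mult.one ∨ tc.mult = Mult.plus) →
      (tc.target = none → b T tc.prop ∈ D.NullLit) ∧
      (∀ T1 : Shape, tc.target = some T1 → b T tc.prop ∈ D.Blank))
    (hJtriple : ∀ s p o : Dom, Fact.triple s p o ∈ J →
      s ∈ D.Iri ∧ p ∈ D.Iri ∧ o ∈ D.Iri ∪ D.Lit)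
    (hJshape : ∀ (T : Shape) (n : Dom), Fact.shape T n ∈ J → n ∈ D.Iri)
    (hJlit : ∀ n : Dom, Fact.lit n ∈ J → n ∈ D.Lit)
    (hJtc : ∀ T : Shape, ∀ tc ∈ S.δ T, ∀ x y : Dom,
      Fact.shape T x ∈ J → Fact.triple x tc.prop y ∈ J → factOf tc.target y ∈ J)
    (hJmult : ∀ T : Shape, ∀ tc ∈ S.δ T, (tc.mult = Mult.one ∨ tc.mult = Mult.opt) →
      ∀ x y z : Dom, Fact.shape T x ∈ J → Fact.triple x tc.prop y ∈ J →
        Fact.triple x tc.prop z ∈ J → y = z)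
    (hfresh : ∀ T p, relevantBP S T p → ∀ F ∈ J, ¬ occursIn (b T p) F)
    (huniq : ∀ (T T'' : Shape) (n : Dom),
      Fact.shape T n ∈ J → Fact.shape T'' n ∈ J → T = T'') :
    satSigma D S (J ∪ J1set S b ∪ J2set S b ∪ J3set S b J) := by
  exact stmt7_general D S b J (uniquelyTyped_J1set hinj)
    (fun T tc htc hm ht => D.nullSub ((hsort T tc htc hm).1 ht))
    (fun T tc htc hm => (hsort T tc htc hm).2) (fun s p o h => (hJtriple s p o h).1)
    hJshape hJlit hJtc hJmult huniq

end RdfDE
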